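/- Let F be a finite field, r, ℓ ≥ 1 integers, and let x_{i_1}, ..., x_{i_ℓ} be nonzero elements of F such that x_{i_1}^{r+ℓ}, ..., x_{i_ℓ}^{r+ℓ} are pairwise distinct. Let (A, B) be a random variable taking values in (F^{a×n})^{r} × (F^{n×b})^{r}, and let the key tuple K = ((K_{A_1},...,K_{A_ℓ}), (K_{B_1},...,K_{B_ℓ})) be uniformly distributed on (F^{a×n})^ℓ × (F^{n×b})^ℓ and independent of (A, B). Define the shares Ã_{i_t} = ∑_{j=1}^{r} A_j x_{i_t}^{j−1} + ∑_{k=1}^{ℓ} K_{A_k} x_{i_t}^{k+r−1} and B̃_{i_t} = ∑_{j'=1}^{r} B_{j'} x_{i_t}^{(j'−1)(r+ℓ)} + ∑_{k=1}^{ℓ} K_{B_k} x_{i_t}^{(k+r−1)(r+ℓ)} for t = 1, ..., ℓ. Then I((A,B) ; (Ã_{i_1},...,Ã_{i_ℓ}, B̃_{i_1},...,B̃_{i_ℓ})) = 0. -/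

import Mathlib

/-!
The scheme is a one-time pad. For fixed data, sending the keys to the shares is a translation of a
linear map whose matrix is a Vandermonde matrix with rows scaled by nonzero factors, so it is a
bijection. A uniform key independent of the data therefore gives shares that are uniform whatever
the data are, i.e. independent of them. The `B` side is the `A` side evaluated at the nodes
`x ^ (r + ℓ)`.
-/

open MeasureTheory ProbabilityTheory

instance matrixMeasurableSpace {m n α : Type*} [MeasurableSpace α] :
    MeasurableSpace (Matrix m n α) := by unfold Matrix; infer_instance

instance matrixMeasurableSingletonClass {m n α : Type*} [Countable m] [Countable n]
    [Countable α] [MeasurableSpace α] [MeasurableSingletonClass α] :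
    MeasurableSingletonClass (Matrix m n α) := by
  unfold Matrix matrixMeasurableSpace; infer_instance

/-- Shannon entropy of a random variable `X` taking values in a finite set:
`H(X) = -∑ₓ P(X = x) log P(X = x)`. -/
noncomputable def Hent {Ω : Type*} [MeasurableSpace Ω] (μ : Measure Ω)
    {α : Type*} [Fintype α] (X : Ω → α) : ℝ :=
  - ∑ x : α, (μ (X ⁻¹' {x})).toReal * Real.log (μ (X ⁻¹' {x})).toReal

/-- Mutual information `I(X ; Y) = H(X) + H(Y) - H(X, Y)`. -/
noncomputable def mutInfo {Ω : Type*} [MeasurableSpace Ω] (μ : Measure Ω)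
    {α β : Type*} [Fintype α] [Fintype β] (X : Ω → α) (Y : Ω → β) : ℝ :=
  Hent μ X + Hent μ Y - Hent μ (fun ω => (X ω, Y ω))

/-- The fully secure encoding polynomial for the `A` side, evaluated at `x`. -/
def encA {F : Type*} [Field F] {a n r ℓ : ℕ}
    (A : Fin r → Matrix (Fin a) (Fin n) F) (KA : Fin ℓ → Matrix (Fin a) (Fin n) F)
    (x : F) : Matrix (Fin a) (Fin n) F :=
  (∑ j : Fin r, x ^ (j : ℕ) • A j) + ∑ k : Fin ℓ, x ^ ((k : ℕ) + r) • KA k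

/-- The fully secure encoding polynomial for the `B` side, evaluated at `x`. -/
def encB {F : Type*} [Field F] {n b r ℓ : ℕ}
    (B : Fin r → Matrix (Fin n) (Fin b) F) (KB : Fin ℓ → Matrix (Fin n) (Fin b) F)
    (x : F) : Matrix (Fin n) (Fin b) F :=
  (∑ j : Fin r, x ^ ((j : ℕ) * (r + ℓ)) • B j) + ∑ k : Fin ℓ, x ^ (((k : ℕ) + r) * (r + ℓ)) • KB k

section MutualInformation

variable {Ω α β : Type*} [MeasurableSpace Ω] {μ : Measure Ω} [Fintype α] [Fintype β]

lemma hent_eq_sum_negMulLog (X : Ω → α) :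
    Hent μ X = ∑ x, Real.negMulLog (μ.real (X ⁻¹' {x})) := by
  simp only [Hent, Real.negMulLog, neg_mul, Finset.sum_neg_distrib, measureReal_def]

variable [MeasurableSpace α] [MeasurableSingletonClass α]
  [MeasurableSpace β] [MeasurableSingletonClass β] [IsProbabilityMeasure μ]
  {X : Ω → α} {Y : Ω → β}

lemma sum_measureReal_preimage_singleton_eq_one (hX : Measurable X) :
    ∑ x, μ.real (X ⁻¹' {x}) = 1 := by
  rw [sum_measureReal_preimage_singleton _ fun x _ => hX (measurableSet_singleton x)]
  simp

lemma hent_prodMk_eq_add_of_indepFun (hX : Measurable X) (hY : Measurable Y)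
    (hXY : IndepFun X Y μ) : Hent μ (fun ω => (X ω, Y ω)) = Hent μ X + Hent μ Y := by
  have joint_law (x : α) (y : β) : μ.real ((fun ω => (X ω, Y ω)) ⁻¹' {(x, y)}) =
      μ.real (X ⁻¹' {x}) * μ.real (Y ⁻¹' {y}) := by
    rw [← Set.singleton_prod_singleton, Set.mk_preimage_prod]
    simp only [measureReal_def, ← ENNReal.toReal_mul, hXY.measure_inter_preimage_eq_mul _ _
      (measurableSet_singleton x) (measurableSet_singleton y)]
  simp only [hent_eq_sum_negMulLog, Fintype.sum_prod_type, joint_law, Real.negMulLog_mul,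
    Finset.sum_add_distrib, ← Finset.sum_mul, ← Finset.mul_sum,
    sum_measureReal_preimage_singleton_eq_one hX,
    sum_measureReal_preimage_singleton_eq_one hY, one_mul]

lemma mutInfo_eq_zero_of_indepFun (hX : Measurable X) (hY : Measurable Y)
    (hXY : IndepFun X Y μ) : mutInfo μ X Y = 0 := by
  rw [mutInfo, hent_prodMk_eq_add_of_indepFun hX hY hXY, sub_self]

end MutualInformation

section OneTimePad

variable {Ω α β κ : Type*} [MeasurableSpace Ω] [MeasurableSpace α] [MeasurableSpace β]
  [MeasurableSpace κ]

lemma map_eq_smul_count_of_bijective [Countable β] [MeasurableSingletonClass β] {ν : Measure κ}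
    {c : ENNReal} (hν : ∀ k, ν {k} = c) {f : κ → β} (hf : Measurable f)
    (hbij : Function.Bijective f) : ν.map f = c • Measure.count := by
  refine Measure.ext_of_singleton fun y => ?_
  obtain ⟨k, rfl⟩ := hbij.surjective y
  rw [Measure.map_apply hf (measurableSet_singleton _), ← Set.image_singleton,
    Set.preimage_image_eq _ hbij.injective, hν, Set.image_singleton, Measure.smul_apply,
    Measure.count_singleton, smul_eq_mul, mul_one]

variable {μ : Measure Ω} [IsProbabilityMeasure μ] {X : Ω → α} {K : Ω → κ} {g : α → κ → β}

lemma indepFun_of_ae_map_eq (hX : Measurable X) (hK : Measurable K) (hXK : IndepFun X K μ)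
    (hg : Measurable (Function.uncurry g)) {ν : Measure β}
    (hν : ∀ᵐ x ∂μ.map X, (μ.map K).map (g x) = ν) :
    IndepFun X (fun ω => g (X ω) (K ω)) μ := by
  have hgXK : Measurable fun ω => g (X ω) (K ω) := hg.comp (hX.prodMk hK)
  have := Measure.isProbabilityMeasure_map (μ := μ) hX.aemeasurable
  obtain ⟨x₀, rfl⟩ := hν.exists
  have skew := (MeasurePreserving.id (μ.map X)).skew_product hg hν
  have joint_law : μ.map (fun ω => (X ω, g (X ω) (K ω))) =
      (μ.map X).prod ((μ.map K).map (g x₀)) := by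
    rw [← skew.map_eq,
      ← (indepFun_iff_map_prod_eq_prod_map_map hX.aemeasurable hK.aemeasurable).1 hXK,
      Measure.map_map skew.measurable (hX.prodMk hK)]
    rfl
  have marginal_law : μ.map (fun ω => g (X ω) (K ω)) = (μ.map K).map (g x₀) := by
    rw [← Measure.snd_map_prodMk hX, joint_law, Measure.snd_prod]
  rw [indepFun_iff_map_prod_eq_prod_map_map hX.aemeasurable hgXK.aemeasurable, joint_law,
    marginal_law]

lemma indepFun_of_bijective_of_uniform [Countable β] [MeasurableSingletonClass β]
    [MeasurableSingletonClass κ] (hX : Measurable X) (hK : Measurable K) (hXK : IndepFun X K μ)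
    {c : ENNReal} (hunif : ∀ k, μ (K ⁻¹' {k}) = c) (hg : Measurable (Function.uncurry g))
    (hbij : ∀ x, Function.Bijective (g x)) : IndepFun X (fun ω => g (X ω) (K ω)) μ := by
  have key_law (k : κ) : μ.map K {k} = c := by
    rw [Measure.map_apply hK (measurableSet_singleton k), hunif]
  exact indepFun_of_ae_map_eq hX hK hXK hg <| ae_of_all _ fun x =>
    map_eq_smul_count_of_bijective key_law hg.of_uncurry_left (hbij x)

end OneTimePad

section Encoding

variable {F : Type*} [Field F] {ℓ : ℕ}

open scoped Matrix.Module in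
lemma sum_pow_add_smul_bijective {V : Type*} [AddCommGroup V] [Module F V] {y : Fin ℓ → F}
    (hy0 : ∀ t, y t ≠ 0) (hy : Function.Injective y) (s : ℕ) :
    Function.Bijective fun (v : Fin ℓ → V) t => ∑ k : Fin ℓ, y t ^ ((k : ℕ) + s) • v k := by
  let M : Matrix (Fin ℓ) (Fin ℓ) F := .of fun t k => y t ^ s * Matrix.vandermonde y t k
  have hM : IsUnit M := by
    rw [Matrix.isUnit_iff_isUnit_det, Matrix.det_mul_column, isUnit_iff_ne_zero]
    exact mul_ne_zero (Finset.prod_ne_zero_iff.2 fun t _ => pow_ne_zero s (hy0 t))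
      (Matrix.det_vandermonde_ne_zero_iff.2 hy)
  have hM_smul (v : Fin ℓ → V) : M • v = fun t => ∑ k : Fin ℓ, y t ^ ((k : ℕ) + s) • v k := by
    simp only [Matrix.Module.smul_def, M, Matrix.of_apply, Matrix.vandermonde_apply, ← pow_add,
      add_comm s]
  simpa only [hM_smul] using hM.smul_bijective (β := Fin ℓ → V)

variable {m n r : ℕ} {x : Fin ℓ → F}

lemma encA_bijective (hx0 : ∀ t, x t ≠ 0) (hx : Function.Injective x)
    (A : Fin r → Matrix (Fin m) (Fin n) F) :
    Function.Bijective fun (K : Fin ℓ → Matrix (Fin m) (Fin n) F) t => encA A K (x t) :=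
  (Equiv.addLeft fun t => ∑ j : Fin r, x t ^ (j : ℕ) • A j).bijective.comp
    (sum_pow_add_smul_bijective hx0 hx r)

lemma encB_eq_encA_pow (B : Fin r → Matrix (Fin m) (Fin n) F)
    (K : Fin ℓ → Matrix (Fin m) (Fin n) F) (z : F) : encB B K z = encA B K (z ^ (r + ℓ)) := by
  simp only [encA, encB, ← pow_mul, mul_comm (r + ℓ)]

lemma encB_bijective (hx0 : ∀ t, x t ≠ 0) (hx : Function.Injective fun t => x t ^ (r + ℓ))
    (B : Fin r → Matrix (Fin m) (Fin n) F) :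
    Function.Bijective fun (K : Fin ℓ → Matrix (Fin m) (Fin n) F) t => encB B K (x t) := by
  simpa only [encB_eq_encA_pow] using encA_bijective (fun t => pow_ne_zero _ (hx0 t)) hx B

end Encoding

/-- Security of the fully secure scheme (equations (6) and (23)): if the key tuple
`K = ((K_{A₁},…,K_{A_ℓ}), (K_{B₁},…,K_{B_ℓ}))` is uniform and independent of `(A, B)`,
and the nonzero points `x_{i₁}, …, x_{i_ℓ}` have pairwise distinct `(r+ℓ)`-th powers,
then `I((A,B) ; (Ã_{i₁},…,Ã_{i_ℓ}, B̃_{i₁},…,B̃_{i_ℓ})) = 0`. -/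
theorem fully_secure_scheme_secure
    {F : Type*} [Field F] [Fintype F] [MeasurableSpace F] [MeasurableSingletonClass F]
    {a n b r ℓ : ℕ} (hr : 1 ≤ r) (hℓ : 1 ≤ ℓ)
    (x : Fin ℓ → F) (hx0 : ∀ t, x t ≠ 0)
    (hx : Function.Injective fun t => x t ^ (r + ℓ))
    {Ω : Type*} [MeasurableSpace Ω] (μ : Measure Ω) [IsProbabilityMeasure μ]
    (AB : Ω → (Fin r → Matrix (Fin a) (Fin n) F) × (Fin r → Matrix (Fin n) (Fin b) F))
    (K : Ω → (Fin ℓ → Matrix (Fin a) (Fin n) F) × (Fin ℓ → Matrix (Fin n) (Fin b) F))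
    (hAB : Measurable AB) (hK : Measurable K)
    (hunif : ∀ k : (Fin ℓ → Matrix (Fin a) (Fin n) F) × (Fin ℓ → Matrix (Fin n) (Fin b) F),
      μ (K ⁻¹' {k}) =
        (Fintype.card ((Fin ℓ → Matrix (Fin a) (Fin n) F) ×
          (Fin ℓ → Matrix (Fin n) (Fin b) F)) : ENNReal)⁻¹)
    (hindep : IndepFun AB K μ) :
    mutInfo μ AB (fun ω =>
      ((fun t : Fin ℓ => encA (AB ω).1 (K ω).1 (x t)),
       (fun t : Fin ℓ => encB (AB ω).2 (K ω).2 (x t)))) = 0 := by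
  have hx_inj : Function.Injective x := fun s t hst => hx (congrArg (· ^ (r + ℓ)) hst)
  let shares (D : (Fin r → Matrix (Fin a) (Fin n) F) × (Fin r → Matrix (Fin n) (Fin b) F))
      (k : (Fin ℓ → Matrix (Fin a) (Fin n) F) × (Fin ℓ → Matrix (Fin n) (Fin b) F)) :=
    ((fun t => encA D.1 k.1 (x t)), (fun t => encB D.2 k.2 (x t)))
  have shares_bijective (D) : Function.Bijective (shares D) :=
    (encA_bijective hx0 hx_inj D.1).prodMap (encB_bijective hx0 hx D.2)
  have shares_measurable : Measurable (Function.uncurry shares) := .of_discrete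
  have shares_indep : IndepFun AB (fun ω => shares (AB ω) (K ω)) μ :=
    indepFun_of_bijective_of_uniform hAB hK hindep hunif shares_measurable shares_bijective
  exact mutInfo_eq_zero_of_indepFun hAB (shares_measurable.comp (hAB.prodMk hK)) shares_indep
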